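/- For every ε > 0 there exists N₁ such that for every N ≥ N₁ and every equidistributing mesh of N elements, the intensity parameter satisfies | √α_h − ‖r‖_{L^{2/3}(Ω)} | ≤ ε; that is, √α_h → ‖r‖_{L^{2/3}(Ω)} as N → ∞ over equidistributing meshes. -/

import Mathlib

/-!
Setting of Huang–He, "Error analysis for equidistributing meshes":
the boundary value problem  −(a u')' + b u' + c u = f on Ω = (0,1), u(0)=u(1)=0,
its linear finite element discretization on a mesh 0 = x₀ < ⋯ < x_N = 1,
and the residual-based equidistribution quantities.
-/

noncomputable section
open MeasureTheory Real

namespace EquidMesh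

/-- L² norm on (0,1). -/
def L2 (g : ℝ → ℝ) : ℝ := Real.sqrt (∫ t in (0:ℝ)..1, (g t)^2)

/-- L¹ norm on (0,1). -/
def L1 (g : ℝ → ℝ) : ℝ := ∫ t in (0:ℝ)..1, |g t|

/-- The L^{2/3} quasi-norm on (0,1): (∫₀¹ |g|^{2/3})^{3/2}. -/
def Lp23 (g : ℝ → ℝ) : ℝ := (∫ t in (0:ℝ)..1, |g t| ^ ((2:ℝ)/3)) ^ ((3:ℝ)/2)

/-- L^∞ norm (essential supremum of |g|) on (0,1). -/
def Linf (g : ℝ → ℝ) : ℝ := essSup (fun t => |g t|) (volume.restrict (Set.Ioo (0:ℝ) 1))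

/-- Membership in L²(0,1). -/
def MemL2 (g : ℝ → ℝ) : Prop :=
  Measurable g ∧ IntervalIntegrable (fun t => (g t)^2) volume 0 1

/-- Membership in L^∞(0,1). -/
def MemLinf (g : ℝ → ℝ) : Prop :=
  Measurable g ∧ ∃ M : ℝ, ∀ᵐ x ∂(volume.restrict (Set.Ioo (0:ℝ) 1)), |g x| ≤ M

/-- `g` is absolutely continuous on [0,1] with derivative `g' ∈ L¹(0,1)`. -/
def HasL1Deriv (g g' : ℝ → ℝ) : Prop :=
  Measurable g' ∧ IntervalIntegrable g' volume 0 1 ∧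
    ∀ x ∈ Set.Icc (0:ℝ) 1, g x = g 0 + ∫ t in (0:ℝ)..x, g' t

/-- A function in H¹(0,1): absolutely continuous on [0,1], carried together with its
(a.e.) derivative, which lies in L²(0,1). -/
structure H1 where
  val : ℝ → ℝ
  dval : ℝ → ℝ
  dval_meas : Measurable dval
  dval_int : IntervalIntegrable dval volume 0 1
  dval_sq_int : IntervalIntegrable (fun t => (dval t)^2) volume 0 1
  ftc : ∀ x ∈ Set.Icc (0:ℝ) 1, val x = val 0 + ∫ t in (0:ℝ)..x, dval t

/-- `u ∈ H²(0,1)`: the derivative `u'` is absolutely continuous with `u'' ∈ L²(0,1)`. -/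
def H1.IsH2 (u : H1) : Prop :=
  ∃ u'' : ℝ → ℝ, Measurable u'' ∧ IntervalIntegrable u'' volume 0 1 ∧
    IntervalIntegrable (fun t => (u'' t)^2) volume 0 1 ∧
    ∀ x ∈ Set.Icc (0:ℝ) 1, u.dval x = u.dval 0 + ∫ t in (0:ℝ)..x, u'' t

/-- The coefficients of the elliptic problem on Ω = (0,1):
`a, b ∈ W^{1,∞}(Ω)`, `c ∈ L^∞(Ω)`, `a ≥ a₀ > 0`, and `c − b'/2 ≥ 0` a.e. -/
structure Coeffs where
  a : ℝ → ℝ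
  b : ℝ → ℝ
  c : ℝ → ℝ
  a' : ℝ → ℝ
  b' : ℝ → ℝ
  a0 : ℝ
  a0_pos : 0 < a0
  a_lb : ∀ x ∈ Set.Icc (0:ℝ) 1, a0 ≤ a x
  a'_meas : Measurable a'
  b'_meas : Measurable b'
  c_meas : Measurable c
  a'_int : IntervalIntegrable a' volume 0 1
  b'_int : IntervalIntegrable b' volume 0 1
  a'_bdd : ∃ M : ℝ, ∀ᵐ x ∂(volume.restrict (Set.Ioo (0:ℝ) 1)), |a' x| ≤ M
  b'_bdd : ∃ M : ℝ, ∀ᵐ x ∂(volume.restrict (Set.Ioo (0:ℝ) 1)), |b' x| ≤ M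
  c_bdd : ∃ M : ℝ, ∀ᵐ x ∂(volume.restrict (Set.Ioo (0:ℝ) 1)), |c x| ≤ M
  ftc_a : ∀ x ∈ Set.Icc (0:ℝ) 1, a x = a 0 + ∫ t in (0:ℝ)..x, a' t
  ftc_b : ∀ x ∈ Set.Icc (0:ℝ) 1, b x = b 0 + ∫ t in (0:ℝ)..x, b' t
  cb_nonneg : ∀ᵐ x ∂(volume.restrict (Set.Ioo (0:ℝ) 1)), 0 ≤ c x - b' x / 2

/-- The bilinear form B(u,v) = ∫₀¹ (a u' v' + b u' v + c u v) dx. -/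
def Coeffs.B (P : Coeffs) (u v : H1) : ℝ :=
  ∫ t in (0:ℝ)..1,
    (P.a t * u.dval t * v.dval t + P.b t * u.dval t * v.val t + P.c t * u.val t * v.val t)

/-- The right-hand side functional (f, v) = ∫₀¹ f v dx. -/
def ip (f : ℝ → ℝ) (v : H1) : ℝ := ∫ t in (0:ℝ)..1, f t * v.val t

/-- `u ∈ H¹₀(Ω)` is the weak solution: B(u,v) = (f,v) for all v ∈ H¹₀(Ω). -/
def Coeffs.IsWeakSolution (P : Coeffs) (f : ℝ → ℝ) (u : H1) : Prop :=
  u.val 0 = 0 ∧ u.val 1 = 0 ∧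
    ∀ v : H1, v.val 0 = 0 → v.val 1 = 0 → P.B u v = ip f v

/-- A mesh of N elements of Ω = (0,1): 0 = x₀ < x₁ < ⋯ < x_N = 1. -/
structure Mesh (N : ℕ) where
  x : ℕ → ℝ
  x_zero : x 0 = 0
  x_last : x N = 1
  x_mono : ∀ i < N, x i < x (i+1)

/-- Element length (the element of index `i` is `(x i, x (i+1))`, `0 ≤ i < N`). -/
def Mesh.h {N : ℕ} (m : Mesh N) (i : ℕ) : ℝ := m.x (i+1) - m.x i

/-- `v` is piecewise linear with respect to the mesh: its derivative is constant
inside each element. -/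
def Mesh.IsPL {N : ℕ} (m : Mesh N) (v : H1) : Prop :=
  ∀ i < N, ∃ s : ℝ, ∀ t ∈ Set.Ioo (m.x i) (m.x (i+1)), v.dval t = s

/-- `uh` is the linear finite element solution on the mesh `m`:
a continuous piecewise linear function vanishing at 0 and 1 with
B(u_h, v_h) = (f, v_h) for all piecewise linear v_h vanishing at 0 and 1. -/
def Coeffs.IsFESolution (P : Coeffs) (f : ℝ → ℝ) {N : ℕ} (m : Mesh N) (uh : H1) : Prop :=
  uh.val 0 = 0 ∧ uh.val 1 = 0 ∧ m.IsPL uh ∧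
    ∀ v : H1, v.val 0 = 0 → v.val 1 = 0 → m.IsPL v → P.B uh v = ip f v

/-- The residual of `w`: r = f + a' w' − b w' − c w. -/
def Coeffs.res (P : Coeffs) (f : ℝ → ℝ) (w : H1) : ℝ → ℝ :=
  fun t => f t + P.a' t * w.dval t - P.b t * w.dval t - P.c t * w.val t

/-- The element L² average ⟨g⟩_i = (h_i⁻¹ ∫_{K_i} g²)^{1/2}. -/
def Mesh.avg {N : ℕ} (m : Mesh N) (g : ℝ → ℝ) (i : ℕ) : ℝ :=
  Real.sqrt ((1 / m.h i) * ∫ t in (m.x i)..(m.x (i+1)), (g t)^2)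

/-- The intensity parameter α_h = (Σ_i h_i ⟨g⟩_i^{2/3})³. -/
def Mesh.alpha {N : ℕ} (m : Mesh N) (g : ℝ → ℝ) : ℝ :=
  (∑ i ∈ Finset.range N, m.h i * (m.avg g i) ^ ((2:ℝ)/3)) ^ 3

/-- The adaptation function value ρ_i = (1 + α_h⁻¹ ⟨g⟩_i²)^{1/3}. -/
def Mesh.rho {N : ℕ} (m : Mesh N) (g : ℝ → ℝ) (i : ℕ) : ℝ :=
  (1 + (m.alpha g)⁻¹ * (m.avg g i)^2) ^ ((1:ℝ)/3)

/-- σ_h = Σ_i ρ_i h_i. -/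
def Mesh.sigma {N : ℕ} (m : Mesh N) (g : ℝ → ℝ) : ℝ :=
  ∑ i ∈ Finset.range N, m.rho g i * m.h i

/-- The mesh equidistributes (the piecewise constant adaptation function built from) `g`:
ρ_i h_i = σ_h / N for all elements. -/
def Mesh.IsEquidistributing {N : ℕ} (m : Mesh N) (g : ℝ → ℝ) : Prop :=
  ∀ i < N, m.rho g i * m.h i = m.sigma g / (N:ℝ)

/-- Membership in the mesh set S_N: 1/(ρ₀ N) ≤ h_i ≤ 2/N for all i. -/
def Mesh.InS {N : ℕ} (m : Mesh N) (ρ0 : ℝ) : Prop :=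
  ∀ i < N, 1 / (ρ0 * (N:ℝ)) ≤ m.h i ∧ m.h i ≤ 2 / (N:ℝ)

/-- The maximum norm distance ‖X − X̃‖_∞ between two meshes with the same N. -/
def meshDist {N : ℕ} (m m' : Mesh N) : ℝ :=
  (Finset.range (N+1)).sup' (Finset.nonempty_range_iff.mpr (Nat.succ_ne_zero N))
    (fun i => |m.x i - m'.x i|)

/-- The energy norm squared ‖v‖_E² = ∫₀¹ (a v'² + (c − b'/2) v²) dx. -/
def Coeffs.energySq (P : Coeffs) (v : H1) : ℝ :=
  ∫ t in (0:ℝ)..1, (P.a t * (v.dval t)^2 + (P.c t - P.b' t / 2) * (v.val t)^2)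

/-!
`√α_h` is the `L^{2/3}` quasi-norm of the step function `⟨r_h⟩` of element `L²` averages of
the residual `r_h`. Write `Π` for the `L²` projection onto step functions. Taking averages is
`1`-Lipschitz elementwise and `⟨Πr⟩ = |Πr|`, so in `L²`
`‖⟨r_h⟩ - |r|‖ ≤ ‖r_h - Πr‖ + ‖Πr - r‖ ≤ ‖r_h - r‖ + 2 ‖r - Πr‖`.
The residual `P.res f w` is Lipschitz in `w` for the `H¹` seminorm, so Céa's lemma applied to the
nodal interpolant, whose derivative is `Πu'`, gives `‖r_h - r‖ ≤ C ‖u' - Πu'‖`. By density of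
continuous functions, `Πg → g` in `L²` for every `g ∈ L²` as the largest element shrinks. Since
`‖·‖_{L^{2/3}}` is continuous under `L²` convergence on `(0,1)`, this gives `√α_h → ‖r‖_{L^{2/3}}`
on every family of meshes with `max h_i → 0`. On equidistributing meshes `h_i ≤ 2 / N`: here
`ρ_i ≥ 1`, and `(1 + t)^{1/3} ≤ 1 + t^{1/3}` yields `σ_h ≤ 2`.
-/

open Filter Topology
open scoped ENNReal NNReal ProbabilityTheory

section Lp

variable {α E : Type*} {mα : MeasurableSpace α} {μ : Measure α} [NormedAddCommGroup E]

lemma lpNorm_mul_le {p q r : ℝ≥0∞} [ENNReal.HolderTriple p q r] {f g : α → ℝ}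
    (hf : MemLp f p μ) (hg : MemLp g q μ) :
    lpNorm (fun x => f x * g x) r μ ≤ lpNorm f p μ * lpNorm g q μ := by
  have hfg : MemLp (fun x => f x * g x) r μ := hg.mul' hf
  have holder : eLpNorm (fun x => f x * g x) r μ ≤ eLpNorm f p μ * eLpNorm g q μ :=
    eLpNorm_smul_le_mul_eLpNorm (φ := f) hg.1 hf.1
  rw [← toReal_eLpNorm hfg.1, ← toReal_eLpNorm hf.1, ← toReal_eLpNorm hg.1,
    ← ENNReal.toReal_mul]
  exact ENNReal.toReal_mono (ENNReal.mul_ne_top hf.eLpNorm_ne_top hg.eLpNorm_ne_top) holder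

lemma lpNorm_le_lpNorm_of_exponent_le [IsProbabilityMeasure μ] {p q : ℝ≥0∞} (hpq : p ≤ q)
    {f : α → E} (hf : MemLp f q μ) : lpNorm f p μ ≤ lpNorm f q μ := by
  rw [← toReal_eLpNorm hf.1, ← toReal_eLpNorm hf.1]
  exact ENNReal.toReal_mono hf.eLpNorm_ne_top (eLpNorm_le_eLpNorm_of_exponent_le hpq hf.1)

lemma lpNorm_le_of_ae_bound [IsProbabilityMeasure μ] {p : ℝ≥0∞} {f : α → E} {C : ℝ}
    (hf : AEStronglyMeasurable f μ) (hC : 0 ≤ C) (h : ∀ᵐ x ∂μ, ‖f x‖ ≤ C) :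
    lpNorm f p μ ≤ C := by
  rw [← toReal_eLpNorm hf]
  exact ENNReal.toReal_le_of_le_ofReal hC (by simpa using eLpNorm_le_of_ae_bound (p := p) h)

lemma abs_integral_le_lpNorm_one {f : α → ℝ} (hf : Integrable f μ) :
    |∫ x, f x ∂μ| ≤ lpNorm f 1 μ := by
  rw [lpNorm_one_eq_integral_norm hf.1]
  exact norm_integral_le_integral_norm f

lemma lpNorm_congr_ae {p : ℝ≥0∞} {f g : α → E} (h : f =ᵐ[μ] g) : lpNorm f p μ = lpNorm g p μ := by
  by_cases hf : AEStronglyMeasurable f μ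
  · rw [← toReal_eLpNorm hf, ← toReal_eLpNorm (hf.congr h), eLpNorm_congr_ae h]
  · rw [lpNorm_of_not_aestronglyMeasurable hf,
      lpNorm_of_not_aestronglyMeasurable (hf <| ·.congr h.symm)]

lemma abs_lpNorm_sub_lpNorm_le {p : ℝ≥0∞} (hp : 1 ≤ p) {f g : α → E} (hf : MemLp f p μ)
    (hg : MemLp g p μ) : |lpNorm f p μ - lpNorm g p μ| ≤ lpNorm (f - g) p μ := by
  have hgf := lpNorm_le_lpNorm_add_lpNorm_sub (f := g) hf hp
  have hfg := lpNorm_le_lpNorm_add_lpNorm_sub' (f := f) hg hp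
  exact abs_sub_le_iff.2 ⟨by linarith, by linarith⟩

lemma lpNorm_abs_sub_abs_le {p : ℝ≥0∞} {f g : α → ℝ} (h : MemLp (f - g) p μ) :
    lpNorm (|f| - |g|) p μ ≤ lpNorm (f - g) p μ :=
  (lpNorm_mono_real h.abs fun x => abs_abs_sub_abs_le (f x) (g x)).trans_eq
    (lpNorm_abs h.1 p)

lemma sq_lpNorm_two {f : α → ℝ} (hf : AEStronglyMeasurable f μ) :
    lpNorm f 2 μ ^ 2 = ∫ x, f x ^ 2 ∂μ := by
  rw [lpNorm_eq_integral_norm_rpow_toReal two_ne_zero ENNReal.ofNat_ne_top hf,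
    ← Real.rpow_natCast, ← Real.rpow_mul (by positivity)]
  simp

lemma memLp_top_mul {g f : α → ℝ} {p : ℝ≥0∞} (hg : MemLp g ∞ μ) (hf : MemLp f p μ) :
    MemLp (fun x => g x * f x) p μ :=
  hf.mul' hg

lemma integrable_mul_mul {g p q : α → ℝ} (hg : MemLp g ∞ μ) (hp : MemLp p 2 μ)
    (hq : MemLp q 2 μ) : Integrable (fun x => g x * p x * q x) μ :=
  (memLp_top_mul hg hp).integrable_mul hq

lemma abs_integral_mul_mul_le {g p q : α → ℝ} (hg : MemLp g ∞ μ) (hp : MemLp p 2 μ)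
    (hq : MemLp q 2 μ) :
    |∫ x, g x * p x * q x ∂μ| ≤ lpNorm g ∞ μ * lpNorm p 2 μ * lpNorm q 2 μ :=
  calc |∫ x, g x * p x * q x ∂μ| ≤ lpNorm (fun x => g x * p x * q x) 1 μ :=
        abs_integral_le_lpNorm_one (integrable_mul_mul hg hp hq)
    _ ≤ lpNorm (fun x => g x * p x) 2 μ * lpNorm q 2 μ := lpNorm_mul_le (memLp_top_mul hg hp) hq
    _ ≤ lpNorm g ∞ μ * lpNorm p 2 μ * lpNorm q 2 μ :=
        mul_le_mul_of_nonneg_right (lpNorm_mul_le hg hp) lpNorm_nonneg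

lemma abs_norm_rpow_sub_norm_rpow_le {s : ℝ} (hs₀ : 0 ≤ s) (hs₁ : s ≤ 1) (x y : E) :
    |‖x‖ ^ s - ‖y‖ ^ s| ≤ ‖x - y‖ ^ s := by
  have key (a b : E) : ‖a‖ ^ s ≤ ‖b‖ ^ s + ‖a - b‖ ^ s :=
    calc ‖a‖ ^ s ≤ (‖b‖ + ‖a - b‖) ^ s := by gcongr; exact norm_le_norm_add_norm_sub' a b
      _ ≤ ‖b‖ ^ s + ‖a - b‖ ^ s :=
        Real.rpow_add_le_add_rpow (norm_nonneg _) (norm_nonneg _) hs₀ hs₁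
  have := key y x
  rw [norm_sub_rev] at this
  exact abs_sub_le_iff.2 ⟨by linarith [key x y], by linarith⟩

lemma lpNorm_rpow {p : ℝ≥0} (hp : p ≠ 0) {f : α → E} (hf : AEStronglyMeasurable f μ) :
    lpNorm f p μ ^ (p : ℝ) = ∫ x, ‖f x‖ ^ (p : ℝ) ∂μ := by
  rw [lpNorm_nnreal_eq_integral_norm_rpow hp hf,
    Real.rpow_inv_rpow (by positivity) (by exact_mod_cast hp)]

lemma abs_lpNorm_rpow_sub_lpNorm_rpow_le {p : ℝ≥0} (hp₀ : p ≠ 0) (hp₁ : p ≤ 1) {f g : α → E}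
    (hf : MemLp f p μ) (hg : MemLp g p μ) :
    |lpNorm f p μ ^ (p : ℝ) - lpNorm g p μ ^ (p : ℝ)| ≤ lpNorm (f - g) p μ ^ (p : ℝ) := by
  have int {h : α → E} (hh : MemLp h p μ) : Integrable (fun x => ‖h x‖ ^ (p : ℝ)) μ :=
    hh.integrable_norm_rpow (by exact_mod_cast hp₀) ENNReal.coe_ne_top
  rw [lpNorm_rpow hp₀ hf.1, lpNorm_rpow hp₀ hg.1, lpNorm_rpow hp₀ (hf.1.sub hg.1),
    ← integral_sub (int hf) (int hg)]
  refine abs_integral_le_integral_abs.trans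
    (integral_mono ((int hf).sub (int hg)).abs (int (hf.sub hg)) fun x => ?_)
  exact abs_norm_rpow_sub_norm_rpow_le p.2 hp₁ (f x) (g x)

lemma exists_abs_lpNorm_sub_lpNorm_le {p : ℝ≥0} (hp₀ : p ≠ 0) (hp₁ : p ≤ 1) {g : α → E}
    (hg : MemLp g p μ) {ε : ℝ} (hε : 0 < ε) :
    ∃ δ > 0, ∀ f : α → E, MemLp f p μ → lpNorm (f - g) p μ ≤ δ →
      |lpNorm f p μ - lpNorm g p μ| ≤ ε := by
  have hp : (p : ℝ) ≠ 0 := by exact_mod_cast hp₀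
  obtain ⟨η, hη, hroot⟩ := Metric.continuousAt_iff.1
    (Real.continuousAt_rpow_const (lpNorm g p μ ^ (p : ℝ)) (p : ℝ)⁻¹ (Or.inr (by positivity))) ε hε
  refine ⟨(η / 2) ^ (p : ℝ)⁻¹, by positivity, fun f hf hfg => ?_⟩
  have hpow : dist (lpNorm f p μ ^ (p : ℝ)) (lpNorm g p μ ^ (p : ℝ)) < η :=
    calc |lpNorm f p μ ^ (p : ℝ) - lpNorm g p μ ^ (p : ℝ)| ≤ lpNorm (f - g) p μ ^ (p : ℝ) :=
          abs_lpNorm_rpow_sub_lpNorm_rpow_le hp₀ hp₁ hf hg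
      _ ≤ ((η / 2) ^ (p : ℝ)⁻¹) ^ (p : ℝ) := Real.rpow_le_rpow lpNorm_nonneg hfg p.2
      _ < η := by rw [Real.rpow_inv_rpow (by positivity) hp]; exact half_lt_self hη
  simpa only [Real.rpow_rpow_inv lpNorm_nonneg hp, Real.dist_eq] using (hroot hpow).le

lemma lpNorm_sub_integral_le [IsProbabilityMeasure μ] {g : α → ℝ} (hg : MemLp g 2 μ) (k : ℝ) :
    lpNorm (fun x => g x - ∫ y, g y ∂μ) 2 μ ≤ lpNorm (fun x => g x - k) 2 μ := by
  have memLp_sub (c : ℝ) : MemLp (fun x => g x - c) 2 μ := hg.sub (memLp_const c)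
  refine (sq_le_sq₀ lpNorm_nonneg lpNorm_nonneg).1 ?_
  rw [sq_lpNorm_two (memLp_sub _).1, sq_lpNorm_two (memLp_sub k).1,
    ← ProbabilityTheory.variance_eq_integral hg.1.aemeasurable,
    ← ProbabilityTheory.variance_sub_const hg.1 k]
  exact ProbabilityTheory.variance_le_expectation_sq (memLp_sub k).1

end Lp

/-- Lebesgue measure on the unit interval, with respect to which all Lebesgue norms on `Ω = (0,1)`
are taken. The half-open interval matches Mathlib's interval integrals. -/
abbrev unitMeasure : Measure ℝ := volume.restrict (Set.Ioc (0 : ℝ) 1)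

instance : IsProbabilityMeasure unitMeasure := ⟨by simp⟩

lemma ae_unitMeasure_iff {p : ℝ → Prop} :
    (∀ᵐ x ∂unitMeasure, p x) ↔ ∀ᵐ x ∂(volume.restrict (Set.Ioo (0 : ℝ) 1)), p x := by
  rw [unitMeasure, Measure.restrict_congr_set Ioo_ae_eq_Ioc]

lemma ae_unitMeasure_mem_Icc : ∀ᵐ x ∂unitMeasure, x ∈ Set.Icc (0 : ℝ) 1 :=
  (ae_restrict_mem measurableSet_Ioc).mono fun _ hx => Set.Ioc_subset_Icc_self hx

lemma intervalIntegral_eq_integral_unitMeasure (g : ℝ → ℝ) :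
    ∫ t in (0 : ℝ)..1, g t = ∫ t, g t ∂unitMeasure :=
  intervalIntegral.integral_of_le zero_le_one

lemma intervalIntegrable_iff_integrable_unitMeasure {g : ℝ → ℝ} :
    IntervalIntegrable g volume 0 1 ↔ Integrable g unitMeasure :=
  intervalIntegrable_iff_integrableOn_Ioc_of_le zero_le_one

lemma memLp_two_unitMeasure_iff {g : ℝ → ℝ} (hg : Measurable g) :
    MemLp g 2 unitMeasure ↔ IntervalIntegrable (fun t => g t ^ 2) volume 0 1 := by
  rw [intervalIntegrable_iff_integrable_unitMeasure,
    memLp_two_iff_integrable_sq hg.aestronglyMeasurable]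

lemma memLp_unitMeasure_of_continuousOn {g : ℝ → ℝ} (hg : ContinuousOn g (Set.Icc 0 1))
    (p : ℝ≥0∞) : MemLp g p unitMeasure := by
  obtain ⟨C, hC⟩ := isCompact_Icc.exists_bound_of_continuousOn hg
  exact MemLp.of_bound
    ((hg.mono Set.Ioc_subset_Icc_self).aestronglyMeasurable measurableSet_Ioc) C
    (ae_unitMeasure_mem_Icc.mono hC)

lemma MemL2.memLp {f : ℝ → ℝ} (hf : MemL2 f) : MemLp f 2 unitMeasure :=
  (memLp_two_unitMeasure_iff hf.1).2 hf.2

lemma MemLinf.memLp {g : ℝ → ℝ} (hg : MemLinf g) : MemLp g ∞ unitMeasure := by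
  obtain ⟨hmeas, M, hM⟩ := hg
  exact memLp_top_of_bound hmeas.aestronglyMeasurable M (ae_unitMeasure_iff.2 hM)

lemma Lp23_eq_lpNorm {g : ℝ → ℝ} (hg : AEStronglyMeasurable g unitMeasure) :
    Lp23 g = lpNorm g (2 / 3 : ℝ≥0) unitMeasure := by
  rw [Lp23, intervalIntegral_eq_integral_unitMeasure,
    lpNorm_nnreal_eq_integral_norm_rpow (by positivity) hg]
  norm_num

namespace HasL1Deriv

variable {g g' v v' : ℝ → ℝ}

lemma exists_absolutelyContinuousOnInterval (h : HasL1Deriv g g') :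
    ∃ G : ℝ → ℝ, AbsolutelyContinuousOnInterval G 0 1 ∧ Set.EqOn g G (Set.Icc 0 1) ∧
      ∀ᵐ x ∂unitMeasure, HasDerivAt G (g' x) x := by
  refine ⟨fun x => g 0 + ∫ t in (0 : ℝ)..x, g' t, ?_, h.2.2, ?_⟩
  · have hconst : AbsolutelyContinuousOnInterval (fun _ : ℝ => g 0) 0 1 :=
      (LipschitzWith.const (g 0)).lipschitzOnWith.absolutelyContinuousOnInterval
    exact hconst.fun_add
      (h.2.1.absolutelyContinuousOnInterval_intervalIntegral (c := 0) (by simp))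
  · filter_upwards [ae_restrict_of_ae h.2.1.ae_hasDerivAt_integral, ae_unitMeasure_mem_Icc]
      with x hderiv hx
    rw [Set.uIcc_of_le zero_le_one] at hderiv
    exact (hderiv hx 0 (by simp)).const_add (g 0)

lemma continuousOn (h : HasL1Deriv g g') : ContinuousOn g (Set.Icc 0 1) := by
  obtain ⟨G, hG, hgG, -⟩ := h.exists_absolutelyContinuousOnInterval
  have hcont := hG.continuousOn
  rw [Set.uIcc_of_le zero_le_one] at hcont
  exact hcont.congr hgG

lemma integral_mul_sq (hg : HasL1Deriv g g') (hv : HasL1Deriv v v') :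
    ∫ x, (g' x * v x * v x + 2 * (g x * v' x * v x)) ∂unitMeasure
      = g 1 * v 1 ^ 2 - g 0 * v 0 ^ 2 := by
  obtain ⟨G, hG, hgG, hG'⟩ := hg.exists_absolutelyContinuousOnInterval
  obtain ⟨V, hV, hvV, hV'⟩ := hv.exists_absolutelyContinuousOnInterval
  have ftc := (hG.fun_mul (hV.fun_mul hV)).integral_deriv_eq_sub
  rw [intervalIntegral_eq_integral_unitMeasure, ← hgG (by simp), ← hgG (by simp),
    ← hvV (by simp), ← hvV (by simp)] at ftc
  rw [sq, sq, ← ftc]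
  refine integral_congr_ae ?_
  filter_upwards [hG', hV', ae_unitMeasure_mem_Icc] with x hGx hVx hx
  rw [(hGx.fun_mul (hVx.fun_mul hVx)).deriv, hgG hx, hvV hx]
  ring

end HasL1Deriv

namespace H1

lemma hasL1Deriv (v : H1) : HasL1Deriv v.val v.dval := ⟨v.dval_meas, v.dval_int, v.ftc⟩

lemma memLp_val (v : H1) : MemLp v.val 2 unitMeasure :=
  memLp_unitMeasure_of_continuousOn v.hasL1Deriv.continuousOn 2

lemma memLp_dval (v : H1) : MemLp v.dval 2 unitMeasure :=
  (memLp_two_unitMeasure_iff v.dval_meas).2 v.dval_sq_int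

lemma intervalIntegrable_dval (v : H1) {x : ℝ} (hx : x ∈ Set.Icc (0 : ℝ) 1) :
    IntervalIntegrable v.dval volume 0 x :=
  v.dval_int.mono_set (Set.uIcc_subset_uIcc_left (by simpa using hx))

instance : Sub H1 where
  sub u v :=
    { val := u.val - v.val
      dval := u.dval - v.dval
      dval_meas := u.dval_meas.sub v.dval_meas
      dval_int := u.dval_int.sub v.dval_int
      dval_sq_int := (memLp_two_unitMeasure_iff (u.dval_meas.sub v.dval_meas)).1
        (u.memLp_dval.sub v.memLp_dval)
      ftc := fun x hx => by
        simp only [Pi.sub_apply]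
        rw [intervalIntegral.integral_sub (u.intervalIntegrable_dval hx)
          (v.intervalIntegrable_dval hx), u.ftc x hx, v.ftc x hx]
        ring }

@[simp] lemma val_sub (u v : H1) (x : ℝ) : (u - v).val x = u.val x - v.val x := rfl

@[simp] lemma dval_sub (u v : H1) (x : ℝ) : (u - v).dval x = u.dval x - v.dval x := rfl

/-- The `H¹` seminorm `‖v'‖_Ω`, a norm on `H¹₀(Ω)`. -/
def seminorm (v : H1) : ℝ := lpNorm v.dval 2 unitMeasure

lemma seminorm_nonneg (v : H1) : 0 ≤ v.seminorm := lpNorm_nonneg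

lemma abs_val_le_seminorm (v : H1) (h₀ : v.val 0 = 0) {x : ℝ} (hx : x ∈ Set.Icc (0 : ℝ) 1) :
    |v.val x| ≤ v.seminorm :=
  calc |v.val x| = |∫ t in (0 : ℝ)..x, v.dval t| := by rw [v.ftc x hx, h₀, zero_add]
    _ ≤ ∫ t in (0 : ℝ)..x, |v.dval t| := intervalIntegral.abs_integral_le_integral_abs hx.1
    _ ≤ ∫ t in (0 : ℝ)..1, |v.dval t| :=
      intervalIntegral.integral_mono_interval le_rfl hx.1 hx.2
        (ae_of_all _ fun _ => abs_nonneg _) v.dval_int.abs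
    _ = lpNorm v.dval 1 unitMeasure := by
      rw [lpNorm_one_eq_integral_norm v.memLp_dval.1, intervalIntegral_eq_integral_unitMeasure]
      rfl
    _ ≤ v.seminorm := lpNorm_le_lpNorm_of_exponent_le one_le_two v.memLp_dval

lemma lpNorm_val_le_seminorm (v : H1) (h₀ : v.val 0 = 0) :
    lpNorm v.val 2 unitMeasure ≤ v.seminorm :=
  lpNorm_le_of_ae_bound v.memLp_val.1 v.seminorm_nonneg <|
    ae_unitMeasure_mem_Icc.mono fun _ hx => v.abs_val_le_seminorm h₀ hx

end H1

namespace Coeffs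

variable (P : Coeffs)

lemma hasL1Deriv_b : HasL1Deriv P.b P.b' := ⟨P.b'_meas, P.b'_int, P.ftc_b⟩

lemma memLp_top_a : MemLp P.a ∞ unitMeasure :=
  memLp_unitMeasure_of_continuousOn
    (HasL1Deriv.continuousOn ⟨P.a'_meas, P.a'_int, P.ftc_a⟩) ∞

lemma memLp_top_b : MemLp P.b ∞ unitMeasure :=
  memLp_unitMeasure_of_continuousOn P.hasL1Deriv_b.continuousOn ∞

lemma memLp_top_a' : MemLp P.a' ∞ unitMeasure :=
  MemLinf.memLp ⟨P.a'_meas, P.a'_bdd⟩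

lemma memLp_top_b' : MemLp P.b' ∞ unitMeasure :=
  MemLinf.memLp ⟨P.b'_meas, P.b'_bdd⟩

lemma memLp_top_c : MemLp P.c ∞ unitMeasure :=
  MemLinf.memLp ⟨P.c_meas, P.c_bdd⟩

lemma B_eq (u v : H1) :
    P.B u v = (∫ t, P.a t * u.dval t * v.dval t ∂unitMeasure)
      + (∫ t, P.b t * u.dval t * v.val t ∂unitMeasure)
      + ∫ t, P.c t * u.val t * v.val t ∂unitMeasure := by
  have ha := integrable_mul_mul P.memLp_top_a u.memLp_dval v.memLp_dval
  have hb := integrable_mul_mul P.memLp_top_b u.memLp_dval v.memLp_val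
  have hc := integrable_mul_mul P.memLp_top_c u.memLp_val v.memLp_val
  rw [B, intervalIntegral_eq_integral_unitMeasure, ← integral_add ha hb]
  exact integral_add (ha.add hb) hc

lemma integrable_B (u v : H1) : Integrable (fun t =>
    P.a t * u.dval t * v.dval t + P.b t * u.dval t * v.val t + P.c t * u.val t * v.val t)
    unitMeasure :=
  ((integrable_mul_mul P.memLp_top_a u.memLp_dval v.memLp_dval).add
    (integrable_mul_mul P.memLp_top_b u.memLp_dval v.memLp_val)).add
    (integrable_mul_mul P.memLp_top_c u.memLp_val v.memLp_val)

lemma B_sub_left (u v w : H1) : P.B (u - v) w = P.B u w - P.B v w := by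
  simp only [B, intervalIntegral_eq_integral_unitMeasure]
  rw [← integral_sub (P.integrable_B u w) (P.integrable_B v w)]
  congr with t
  simp only [H1.val_sub, H1.dval_sub]
  ring

lemma B_sub_right (u v w : H1) : P.B u (v - w) = P.B u v - P.B u w := by
  simp only [B, intervalIntegral_eq_integral_unitMeasure]
  rw [← integral_sub (P.integrable_B u v) (P.integrable_B u w)]
  congr with t
  simp only [H1.val_sub, H1.dval_sub]
  ring

/-- The continuity constant `‖a‖_∞ + ‖b‖_∞ + ‖c‖_∞` of `B` with respect to the `H¹` seminorm. -/
def continuityConst : ℝ :=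
  lpNorm P.a ∞ unitMeasure + lpNorm P.b ∞ unitMeasure + lpNorm P.c ∞ unitMeasure

lemma continuityConst_nonneg : 0 ≤ P.continuityConst :=
  add_nonneg (add_nonneg lpNorm_nonneg lpNorm_nonneg) lpNorm_nonneg

lemma abs_B_le {u v : H1} (hu : u.val 0 = 0) (hv : v.val 0 = 0) :
    |P.B u v| ≤ P.continuityConst * u.seminorm * v.seminorm := by
  have bound {g p q : ℝ → ℝ} (hg : MemLp g ∞ unitMeasure) (hp : MemLp p 2 unitMeasure)
      (hq : MemLp q 2 unitMeasure) (hpu : lpNorm p 2 unitMeasure ≤ u.seminorm)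
      (hqv : lpNorm q 2 unitMeasure ≤ v.seminorm) :
      |∫ t, g t * p t * q t ∂unitMeasure| ≤ lpNorm g ∞ unitMeasure * u.seminorm * v.seminorm :=
    (abs_integral_mul_mul_le hg hp hq).trans <|
      mul_le_mul (mul_le_mul_of_nonneg_left hpu lpNorm_nonneg) hqv lpNorm_nonneg
        (mul_nonneg lpNorm_nonneg u.seminorm_nonneg)
  have ha := bound P.memLp_top_a u.memLp_dval v.memLp_dval le_rfl le_rfl
  have hb := bound P.memLp_top_b u.memLp_dval v.memLp_val le_rfl (v.lpNorm_val_le_seminorm hv)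
  have hc := bound P.memLp_top_c u.memLp_val v.memLp_val (u.lpNorm_val_le_seminorm hu)
    (v.lpNorm_val_le_seminorm hv)
  rw [B_eq, continuityConst]
  linarith [abs_add_three (∫ t, P.a t * u.dval t * v.dval t ∂unitMeasure)
    (∫ t, P.b t * u.dval t * v.val t ∂unitMeasure) (∫ t, P.c t * u.val t * v.val t ∂unitMeasure)]

lemma integral_b_mul_dval_mul_val {v : H1} (h₀ : v.val 0 = 0) (h₁ : v.val 1 = 0) :
    ∫ t, P.b t * v.dval t * v.val t ∂unitMeasure
      = -(1 / 2) * ∫ t, P.b' t * v.val t * v.val t ∂unitMeasure := by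
  have parts := P.hasL1Deriv_b.integral_mul_sq v.hasL1Deriv
  rw [integral_add (integrable_mul_mul P.memLp_top_b' v.memLp_val v.memLp_val)
    ((integrable_mul_mul P.memLp_top_b v.memLp_dval v.memLp_val).const_mul 2),
    integral_const_mul, h₀, h₁] at parts
  linarith

lemma coercive {v : H1} (h₀ : v.val 0 = 0) (h₁ : v.val 1 = 0) :
    P.a0 * v.seminorm ^ 2 ≤ P.B v v := by
  have diffusion : P.a0 * v.seminorm ^ 2 ≤ ∫ t, P.a t * v.dval t * v.dval t ∂unitMeasure := by
    rw [H1.seminorm, sq_lpNorm_two v.memLp_dval.1, ← integral_const_mul]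
    refine integral_mono_ae (v.memLp_dval.integrable_sq.const_mul _)
      (integrable_mul_mul P.memLp_top_a v.memLp_dval v.memLp_dval) ?_
    filter_upwards [ae_unitMeasure_mem_Icc] with x hx
    nlinarith [mul_le_mul_of_nonneg_right (P.a_lb x hx) (sq_nonneg (v.dval x))]
  have reaction : 0 ≤ (∫ t, P.c t * v.val t * v.val t ∂unitMeasure)
      - (1 / 2) * ∫ t, P.b' t * v.val t * v.val t ∂unitMeasure := by
    rw [← integral_const_mul, ← integral_sub
      (integrable_mul_mul P.memLp_top_c v.memLp_val v.memLp_val)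
      ((integrable_mul_mul P.memLp_top_b' v.memLp_val v.memLp_val).const_mul _)]
    refine integral_nonneg_of_ae ?_
    filter_upwards [ae_unitMeasure_iff.2 P.cb_nonneg] with x hx
    simp only [Pi.zero_apply]
    nlinarith [mul_nonneg hx (sq_nonneg (v.val x))]
  rw [B_eq, P.integral_b_mul_dval_mul_val h₀ h₁]
  linarith

section FiniteElement

variable {f : ℝ → ℝ} {u uh : H1} {N : ℕ} {m : Mesh N}

lemma B_sub_eq_zero (hu : P.IsWeakSolution f u) (huh : P.IsFESolution f m uh) {v : H1}
    (h₀ : v.val 0 = 0) (h₁ : v.val 1 = 0) (hv : m.IsPL v) : P.B (u - uh) v = 0 := by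
  rw [B_sub_left, hu.2.2 v h₀ h₁, huh.2.2.2 v h₀ h₁ hv, sub_self]

/-- Céa's lemma. -/
lemma seminorm_sub_le (hu : P.IsWeakSolution f u) (huh : P.IsFESolution f m uh) {v : H1}
    (h₀ : v.val 0 = 0) (h₁ : v.val 1 = 0) (hv : m.IsPL v) :
    (u - uh).seminorm ≤ P.continuityConst / P.a0 * (u - v).seminorm := by
  have sub_zero {w : H1} {x : ℝ} (hux : u.val x = 0) (hwx : w.val x = 0) :
      (u - w).val x = 0 := by rw [H1.val_sub, hux, hwx, sub_self]
  have galerkin : P.B (u - uh) (u - uh) = P.B (u - uh) (u - v) := by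
    rw [P.B_sub_right _ u uh, P.B_sub_right _ u v,
      P.B_sub_eq_zero hu huh huh.1 huh.2.1 huh.2.2.1, P.B_sub_eq_zero hu huh h₀ h₁ hv]
  have energy : P.a0 * (u - uh).seminorm ^ 2
      ≤ P.continuityConst * (u - uh).seminorm * (u - v).seminorm :=
    calc P.a0 * (u - uh).seminorm ^ 2 ≤ P.B (u - uh) (u - uh) :=
          P.coercive (sub_zero hu.1 huh.1) (sub_zero hu.2.1 huh.2.1)
      _ ≤ |P.B (u - uh) (u - v)| := galerkin ▸ le_abs_self _
      _ ≤ _ := P.abs_B_le (sub_zero hu.1 huh.1) (sub_zero hu.1 h₀)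
  rw [div_mul_eq_mul_div, le_div_iff₀' P.a0_pos]
  rcases (u - uh).seminorm_nonneg.eq_or_lt with h | h
  · rw [← h, mul_zero]
    exact mul_nonneg P.continuityConst_nonneg (u - v).seminorm_nonneg
  · exact le_of_mul_le_mul_right (by linarith) h

end FiniteElement

lemma memLp_res {f : ℝ → ℝ} (hf : MemL2 f) (w : H1) : MemLp (P.res f w) 2 unitMeasure :=
  ((hf.memLp.add (memLp_top_mul P.memLp_top_a' w.memLp_dval)).sub
    (memLp_top_mul P.memLp_top_b w.memLp_dval)).sub (memLp_top_mul P.memLp_top_c w.memLp_val)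

lemma lpNorm_res_sub_res_le (f : ℝ → ℝ) {v w : H1} (hv : v.val 0 = 0) (hw : w.val 0 = 0) :
    lpNorm (P.res f v - P.res f w) 2 unitMeasure
      ≤ (lpNorm (P.a' - P.b) ∞ unitMeasure + lpNorm P.c ∞ unitMeasure) * (v - w).seminorm := by
  have hab := P.memLp_top_a'.sub P.memLp_top_b
  have he : (v - w).val 0 = 0 := by rw [H1.val_sub, hv, hw, sub_self]
  have eq : P.res f v - P.res f w
      = (fun t => (P.a' - P.b) t * (v - w).dval t) - fun t => P.c t * (v - w).val t := by
    ext t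
    simp only [res, Pi.sub_apply, H1.val_sub, H1.dval_sub]
    ring
  calc lpNorm (P.res f v - P.res f w) 2 unitMeasure
      ≤ lpNorm (fun t => (P.a' - P.b) t * (v - w).dval t) 2 unitMeasure
        + lpNorm (fun t => P.c t * (v - w).val t) 2 unitMeasure := by
        rw [eq]
        exact lpNorm_sub_le (memLp_top_mul hab (v - w).memLp_dval) one_le_two
    _ ≤ lpNorm (P.a' - P.b) ∞ unitMeasure * (v - w).seminorm
        + lpNorm P.c ∞ unitMeasure * lpNorm (v - w).val 2 unitMeasure :=
        add_le_add (lpNorm_mul_le hab (v - w).memLp_dval)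
          (lpNorm_mul_le P.memLp_top_c (v - w).memLp_val)
    _ ≤ _ := by
        rw [add_mul]
        gcongr
        · exact lpNorm_nonneg
        · exact (v - w).lpNorm_val_le_seminorm he

end Coeffs

namespace Mesh

variable {N : ℕ} (m : Mesh N)

lemma x_le_x {i j : ℕ} (hij : i ≤ j) (hj : j ≤ N) : m.x i ≤ m.x j := by
  induction j, hij using Nat.le_induction with
  | base => exact le_rfl
  | succ j _ ih => exact (ih (by lia)).trans (m.x_mono j (by lia)).le

lemma x_mem_Icc {i : ℕ} (hi : i ≤ N) : m.x i ∈ Set.Icc (0 : ℝ) 1 :=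
  ⟨m.x_zero ▸ m.x_le_x (Nat.zero_le i) hi, m.x_last ▸ m.x_le_x hi le_rfl⟩

lemma h_pos {i : ℕ} (hi : i < N) : 0 < m.h i := sub_pos.2 (m.x_mono i hi)

lemma sum_h : ∑ i ∈ Finset.range N, m.h i = 1 := by
  simp only [h, Finset.sum_range_sub, m.x_zero, m.x_last, sub_zero]

/-- Normalized Lebesgue measure on the element `K_i`, so that `∫ g ∂(m.elem i)` is the mean of `g`
over `K_i` and `lpNorm g 2 (m.elem i)` is the element `L²` average `⟨g⟩_i`. -/
def elem (i : ℕ) : Measure ℝ := volume[|Set.Ioc (m.x i) (m.x (i + 1))]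

variable {i : ℕ}

lemma isProbabilityMeasure_elem (hi : i < N) : IsProbabilityMeasure (m.elem i) :=
  ProbabilityTheory.cond_isProbabilityMeasure_of_finite
    (by simpa using m.x_mono i hi) (by simp)

lemma ae_elem_of_forall_mem {p : ℝ → Prop} (h : ∀ t ∈ Set.Ioc (m.x i) (m.x (i + 1)), p t) :
    ∀ᵐ t ∂(m.elem i), p t :=
  ProbabilityTheory.ae_cond_of_forall_mem measurableSet_Ioc h

lemma integral_elem (hi : i < N) (g : ℝ → ℝ) :
    ∫ t, g t ∂(m.elem i) = (m.h i)⁻¹ * ∫ t in (m.x i)..(m.x (i + 1)), g t := by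
  rw [elem, ProbabilityTheory.cond, integral_smul_measure, Real.volume_Ioc, ENNReal.toReal_inv,
    ENNReal.toReal_ofReal (sub_nonneg.2 (m.x_mono i hi).le), smul_eq_mul,
    intervalIntegral.integral_of_le (m.x_mono i hi).le, h]

lemma memLp_elem {p : ℝ≥0∞} {g : ℝ → ℝ} (hg : MemLp g p unitMeasure) (hi : i < N) :
    MemLp g p (m.elem i) := by
  have hsub : Set.Ioc (m.x i) (m.x (i + 1)) ⊆ Set.Ioc 0 1 :=
    Set.Ioc_subset_Ioc (m.x_mem_Icc hi.le).1 (m.x_mem_Icc hi).2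
  exact (hg.mono_measure (Measure.restrict_mono_set volume hsub)).smul_measure
    (by simpa using m.x_mono i hi)

lemma sum_h_mul_integral_elem {g : ℝ → ℝ} (hg : Integrable g unitMeasure) :
    ∑ i ∈ Finset.range N, m.h i * ∫ t, g t ∂(m.elem i) = ∫ t, g t ∂unitMeasure := by
  have hint (i : ℕ) (hi : i < N) : IntervalIntegrable g volume (m.x i) (m.x (i + 1)) :=
    (intervalIntegrable_iff_integrable_unitMeasure.2 hg).mono_set <|
      Set.uIcc_subset_uIcc (by simpa using m.x_mem_Icc hi.le) (by simpa using m.x_mem_Icc hi)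
  calc ∑ i ∈ Finset.range N, m.h i * ∫ t, g t ∂(m.elem i)
      = ∑ i ∈ Finset.range N, ∫ t in (m.x i)..(m.x (i + 1)), g t :=
        Finset.sum_congr rfl fun i hi => by
          have hi := Finset.mem_range.1 hi
          rw [m.integral_elem hi, mul_inv_cancel_left₀ (m.h_pos hi).ne']
    _ = ∫ t, g t ∂unitMeasure := by
        rw [intervalIntegral.sum_integral_adjacent_intervals hint, m.x_zero, m.x_last,
          intervalIntegral_eq_integral_unitMeasure]

lemma sum_h_mul_sq_lpNorm_elem {g : ℝ → ℝ} (hg : MemLp g 2 unitMeasure) :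
    ∑ i ∈ Finset.range N, m.h i * lpNorm g 2 (m.elem i) ^ 2 = lpNorm g 2 unitMeasure ^ 2 := by
  rw [sq_lpNorm_two hg.1, ← m.sum_h_mul_integral_elem hg.integrable_sq]
  exact Finset.sum_congr rfl fun i hi => by
    rw [sq_lpNorm_two (m.memLp_elem hg (Finset.mem_range.1 hi)).1]

lemma lpNorm_le_of_forall_elem {f g : ℝ → ℝ} (hf : MemLp f 2 unitMeasure)
    (hg : MemLp g 2 unitMeasure)
    (h : ∀ i < N, lpNorm f 2 (m.elem i) ≤ lpNorm g 2 (m.elem i)) :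
    lpNorm f 2 unitMeasure ≤ lpNorm g 2 unitMeasure := by
  refine (sq_le_sq₀ lpNorm_nonneg lpNorm_nonneg).1 ?_
  rw [← m.sum_h_mul_sq_lpNorm_elem hf, ← m.sum_h_mul_sq_lpNorm_elem hg]
  gcongr with i hi
  · exact (m.h_pos (Finset.mem_range.1 hi)).le
  · exact lpNorm_nonneg
  · exact h i (Finset.mem_range.1 hi)

lemma avg_nonneg (g : ℝ → ℝ) (i : ℕ) : 0 ≤ m.avg g i := Real.sqrt_nonneg _

lemma sum_h_mul_avg_rpow_nonneg (g : ℝ → ℝ) :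
    0 ≤ ∑ i ∈ Finset.range N, m.h i * m.avg g i ^ ((2 : ℝ) / 3) :=
  Finset.sum_nonneg fun _ hi =>
    mul_nonneg (m.h_pos (Finset.mem_range.1 hi)).le (Real.rpow_nonneg (m.avg_nonneg g _) _)

lemma avg_eq_lpNorm_elem {g : ℝ → ℝ} (hg : MemLp g 2 unitMeasure) (hi : i < N) :
    m.avg g i = lpNorm g 2 (m.elem i) := by
  rw [avg, one_div, ← m.integral_elem hi, ← sq_lpNorm_two (m.memLp_elem hg hi).1,
    Real.sqrt_sq lpNorm_nonneg]

/-- The step function with value `k i` on the element `K_i`. -/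
def step (k : ℕ → ℝ) (t : ℝ) : ℝ :=
  ∑ i ∈ Finset.range N, (Set.Ioc (m.x i) (m.x (i + 1))).indicator (fun _ => k i) t

lemma step_eq (k : ℕ → ℝ) (hi : i < N) {t : ℝ} (ht : t ∈ Set.Ioc (m.x i) (m.x (i + 1))) :
    m.step k t = k i := by
  rw [step, Finset.sum_eq_single_of_mem i (Finset.mem_range.2 hi), Set.indicator_of_mem ht]
  intro j hj hji
  have hj := Finset.mem_range.1 hj
  refine Set.indicator_of_notMem (fun htj => ?_) _
  rcases lt_or_gt_of_ne hji with hlt | hgt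
  · exact absurd (m.x_le_x (Nat.succ_le_of_lt hlt) hi.le) (by linarith [htj.2, ht.1])
  · exact absurd (m.x_le_x (Nat.succ_le_of_lt hgt) hj.le) (by linarith [htj.1, ht.2])

lemma step_ae_eq (k : ℕ → ℝ) (hi : i < N) : m.step k =ᵐ[m.elem i] fun _ => k i :=
  m.ae_elem_of_forall_mem fun _ => m.step_eq k hi

lemma measurable_step (k : ℕ → ℝ) : Measurable (m.step k) :=
  Finset.measurable_fun_sum _ fun _ _ => measurable_const.indicator measurableSet_Ioc

lemma memLp_step (k : ℕ → ℝ) (p : ℝ≥0∞) : MemLp (m.step k) p unitMeasure :=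
  memLp_finsetSum _ fun _ _ => (memLp_const _).indicator measurableSet_Ioc

lemma lpNorm_sub_step_elem (g : ℝ → ℝ) (k : ℕ → ℝ) (hi : i < N) (p : ℝ≥0∞) :
    lpNorm (g - m.step k) p (m.elem i) = lpNorm (fun t => g t - k i) p (m.elem i) :=
  lpNorm_congr_ae <| (m.step_ae_eq k hi).mono fun _ ht => by rw [Pi.sub_apply, ht]

/-- The `L²` projection of `g` onto step functions, whose values are the element means. -/
def project (g : ℝ → ℝ) : ℝ → ℝ := m.step fun i => ∫ t, g t ∂(m.elem i)

lemma integral_project {g : ℝ → ℝ} (hg : Integrable g unitMeasure) :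
    ∫ t, m.project g t ∂unitMeasure = ∫ t, g t ∂unitMeasure := by
  rw [project, ← m.sum_h_mul_integral_elem hg,
    ← m.sum_h_mul_integral_elem ((m.memLp_step _ 1).integrable le_rfl)]
  refine Finset.sum_congr rfl fun i hi => ?_
  have hi := Finset.mem_range.1 hi
  have := m.isProbabilityMeasure_elem hi
  rw [integral_congr_ae (m.step_ae_eq _ hi)]
  simp

lemma lpNorm_sub_project_le {g : ℝ → ℝ} (hg : MemLp g 2 unitMeasure) (k : ℕ → ℝ) :
    lpNorm (g - m.project g) 2 unitMeasure ≤ lpNorm (g - m.step k) 2 unitMeasure := by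
  refine m.lpNorm_le_of_forall_elem (hg.sub (m.memLp_step _ 2)) (hg.sub (m.memLp_step k 2))
    fun i hi => ?_
  have := m.isProbabilityMeasure_elem hi
  rw [project, m.lpNorm_sub_step_elem g _ hi, m.lpNorm_sub_step_elem g k hi]
  exact lpNorm_sub_integral_le (m.memLp_elem hg hi) (k i)

lemma lpNorm_sub_step_comp_x_le {φ : ℝ → ℝ} (hφ : MemLp φ 2 unitMeasure) {δ ε : ℝ} (hε : 0 ≤ ε)
    (h : ∀ s t, |s - t| ≤ δ → |φ s - φ t| ≤ ε) (hm : ∀ i < N, m.h i ≤ δ) :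
    lpNorm (φ - m.step (φ ∘ m.x)) 2 unitMeasure ≤ ε := by
  have hconst : lpNorm (fun _ => ε) 2 unitMeasure = ε := by
    simp [abs_of_nonneg hε]
  rw [← hconst]
  refine m.lpNorm_le_of_forall_elem (hφ.sub (m.memLp_step _ 2)) (memLp_const ε) fun i hi => ?_
  have := m.isProbabilityMeasure_elem hi
  rw [m.lpNorm_sub_step_elem φ _ hi,
    lpNorm_const two_ne_zero (IsProbabilityMeasure.ne_zero _), probReal_univ, Real.one_rpow,
    mul_one, Real.norm_of_nonneg hε]
  refine lpNorm_le_of_ae_bound ((m.memLp_elem hφ hi).sub (memLp_const _)).1 hε <|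
    m.ae_elem_of_forall_mem fun t ht => h t (m.x i) ?_
  have hlen := hm i hi
  rw [Mesh.h] at hlen
  rw [abs_of_nonneg (by linarith [ht.1])]
  linarith [ht.2]

lemma exists_lpNorm_sub_project_le {g : ℝ → ℝ} (hg : MemLp g 2 unitMeasure) {ε : ℝ}
    (hε : 0 < ε) :
    ∃ δ > 0, ∀ {N : ℕ} (m : Mesh N), (∀ i < N, m.h i ≤ δ) →
      lpNorm (g - m.project g) 2 unitMeasure ≤ ε := by
  obtain ⟨φ, hφc, hgφ, hφ, hφ2⟩ := hg.exists_hasCompactSupport_eLpNorm_sub_le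
    ENNReal.ofNat_ne_top (ENNReal.ofReal_pos.2 (half_pos hε)).ne'
  obtain ⟨δ, hδ, hunif⟩ := Metric.uniformContinuous_iff_le.1
    (hφc.uniformContinuous_of_continuous hφ) (ε / 2) (half_pos hε)
  refine ⟨δ, hδ, fun m hm => ?_⟩
  calc lpNorm (g - m.project g) 2 unitMeasure
      ≤ lpNorm (g - m.step (φ ∘ m.x)) 2 unitMeasure := m.lpNorm_sub_project_le hg _
    _ ≤ lpNorm (g - φ) 2 unitMeasure + lpNorm (φ - m.step (φ ∘ m.x)) 2 unitMeasure :=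
        lpNorm_sub_le_lpNorm_sub_add_lpNorm_sub hg hφ2 one_le_two
    _ ≤ ε / 2 + ε / 2 := by
        gcongr
        · rw [← toReal_eLpNorm (hg.sub hφ2).1]
          exact ENNReal.toReal_le_of_le_ofReal (half_pos hε).le hgφ
        · exact m.lpNorm_sub_step_comp_x_le hφ2 (half_pos hε).le (fun s t hst => hunif hst) hm
    _ = ε := add_halves ε

/-- The nodal interpolant of `u`. Its slopes are the element means of `u'`, so its derivative is
the `L²` projection of `u'`. -/
def interp (u : H1) : H1 where
  val x := u.val 0 + ∫ t in (0 : ℝ)..x, m.project u.dval t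
  dval := m.project u.dval
  dval_meas := m.measurable_step _
  dval_int := intervalIntegrable_iff_integrable_unitMeasure.2
    ((m.memLp_step _ 1).integrable le_rfl)
  dval_sq_int := (memLp_two_unitMeasure_iff (m.measurable_step _)).1 (m.memLp_step _ 2)
  ftc := by simp

lemma isPL_interp (u : H1) : m.IsPL (m.interp u) :=
  fun _ hi => ⟨_, fun _ ht => m.step_eq _ hi (Set.Ioo_subset_Ioc_self ht)⟩

lemma interp_val_zero (u : H1) : (m.interp u).val 0 = u.val 0 := by simp [interp]

lemma interp_val_one (u : H1) : (m.interp u).val 1 = u.val 1 := by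
  have hint : ∫ t in (0 : ℝ)..1, m.project u.dval t = ∫ t in (0 : ℝ)..1, u.dval t := by
    simpa only [intervalIntegral_eq_integral_unitMeasure] using
      m.integral_project (u.memLp_dval.integrable one_le_two)
  rw [u.ftc 1 (by simp), ← hint, interp]

/-- The step function of the element averages `⟨q⟩_i`. -/
def avgStep (q : ℝ → ℝ) : ℝ → ℝ := m.step (m.avg q)

lemma sqrt_alpha (q : ℝ → ℝ) : √(m.alpha q) = Lp23 (m.avgStep q) := by
  have hint : Integrable (fun t => |m.avgStep q t| ^ ((2 : ℝ) / 3)) unitMeasure := by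
    simpa [avgStep] using (m.memLp_step (m.avg q) (2 / 3 : ℝ≥0)).integrable_norm_rpow (by simp)
      ENNReal.coe_ne_top
  have hsum : ∫ t in (0 : ℝ)..1, |m.avgStep q t| ^ ((2 : ℝ) / 3)
      = ∑ i ∈ Finset.range N, m.h i * m.avg q i ^ ((2 : ℝ) / 3) := by
    rw [intervalIntegral_eq_integral_unitMeasure, ← m.sum_h_mul_integral_elem hint]
    refine Finset.sum_congr rfl fun i hi => ?_
    have hi := Finset.mem_range.1 hi
    have := m.isProbabilityMeasure_elem hi
    have hval : (fun t => |m.avgStep q t| ^ ((2 : ℝ) / 3))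
        =ᵐ[m.elem i] fun _ => m.avg q i ^ ((2 : ℝ) / 3) :=
      (m.step_ae_eq (m.avg q) hi).mono fun t ht => by
        simp only [avgStep, ht, abs_of_nonneg (m.avg_nonneg q i)]
    rw [integral_congr_ae hval]
    simp
  rw [Lp23, hsum, alpha, Real.sqrt_eq_rpow, ← Real.rpow_natCast,
    ← Real.rpow_mul (m.sum_h_mul_avg_rpow_nonneg q)]
  norm_num

lemma lpNorm_avgStep_sub_abs_step_le {q : ℝ → ℝ} (hq : MemLp q 2 unitMeasure) (k : ℕ → ℝ) :
    lpNorm (m.avgStep q - |m.step k|) 2 unitMeasure ≤ lpNorm (q - m.step k) 2 unitMeasure := by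
  refine m.lpNorm_le_of_forall_elem ((m.memLp_step _ 2).sub (m.memLp_step k 2).abs)
    (hq.sub (m.memLp_step k 2)) fun i hi => ?_
  have := m.isProbabilityMeasure_elem hi
  have hval : m.avgStep q - |m.step k| =ᵐ[m.elem i] fun _ => m.avg q i - |k i| := by
    filter_upwards [m.step_ae_eq (m.avg q) hi, m.step_ae_eq k hi] with t havg hk
    rw [Pi.sub_apply, Pi.abs_apply, avgStep, havg, hk]
  have hconst (c : ℝ) : lpNorm (fun _ => c) 2 (m.elem i) = |c| := by
    simp [lpNorm_const two_ne_zero (IsProbabilityMeasure.ne_zero (m.elem i))]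
  rw [lpNorm_congr_ae hval, hconst, m.avg_eq_lpNorm_elem hq hi, ← hconst (k i),
    m.lpNorm_sub_step_elem q k hi]
  exact abs_lpNorm_sub_lpNorm_le one_le_two (m.memLp_elem hq hi) (memLp_const (k i))

lemma lpNorm_avgStep_sub_abs_le {q r : ℝ → ℝ} (hq : MemLp q 2 unitMeasure)
    (hr : MemLp r 2 unitMeasure) :
    lpNorm (m.avgStep q - |r|) 2 unitMeasure
      ≤ lpNorm (q - r) 2 unitMeasure + 2 * lpNorm (r - m.project r) 2 unitMeasure := by
  have hproj : MemLp (m.project r) 2 unitMeasure := m.memLp_step _ 2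
  calc lpNorm (m.avgStep q - |r|) 2 unitMeasure
      ≤ lpNorm (m.avgStep q - |m.project r|) 2 unitMeasure
        + lpNorm (|m.project r| - |r|) 2 unitMeasure :=
        lpNorm_sub_le_lpNorm_sub_add_lpNorm_sub (m.memLp_step _ 2) hproj.abs one_le_two
    _ ≤ lpNorm (q - m.project r) 2 unitMeasure + lpNorm (m.project r - r) 2 unitMeasure :=
        add_le_add (m.lpNorm_avgStep_sub_abs_step_le hq _) (lpNorm_abs_sub_abs_le (hproj.sub hr))
    _ ≤ lpNorm (q - r) 2 unitMeasure + lpNorm (r - m.project r) 2 unitMeasure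
        + lpNorm (r - m.project r) 2 unitMeasure := by
        rw [lpNorm_sub_comm (m.project r) r]
        gcongr
        exact lpNorm_sub_le_lpNorm_sub_add_lpNorm_sub hq hr one_le_two
    _ = _ := by ring

lemma inv_alpha_mul_sq_avg_nonneg (g : ℝ → ℝ) (i : ℕ) :
    0 ≤ (m.alpha g)⁻¹ * m.avg g i ^ 2 :=
  mul_nonneg (inv_nonneg.2 (pow_nonneg (m.sum_h_mul_avg_rpow_nonneg g) 3)) (sq_nonneg _)

lemma one_le_rho (g : ℝ → ℝ) (i : ℕ) : 1 ≤ m.rho g i :=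
  Real.one_le_rpow (le_add_of_nonneg_right (m.inv_alpha_mul_sq_avg_nonneg g i)) (by norm_num)

lemma rho_le (g : ℝ → ℝ) (i : ℕ) :
    m.rho g i ≤ 1 + (∑ j ∈ Finset.range N, m.h j * m.avg g j ^ ((2 : ℝ) / 3))⁻¹
      * m.avg g i ^ ((2 : ℝ) / 3) := by
  have hS := m.sum_h_mul_avg_rpow_nonneg g
  calc m.rho g i ≤ 1 ^ ((1 : ℝ) / 3) + ((m.alpha g)⁻¹ * m.avg g i ^ 2) ^ ((1 : ℝ) / 3) :=
        Real.rpow_add_le_add_rpow zero_le_one (m.inv_alpha_mul_sq_avg_nonneg g i)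
          (by norm_num) (by norm_num)
    _ = _ := by
        rw [alpha, Real.one_rpow, Real.mul_rpow (by positivity) (sq_nonneg _), ← inv_pow,
          ← Real.rpow_natCast, ← Real.rpow_natCast, ← Real.rpow_mul (by positivity),
          ← Real.rpow_mul (m.avg_nonneg g i)]
        norm_num

lemma sigma_le_two (g : ℝ → ℝ) : m.sigma g ≤ 2 := by
  set S := ∑ i ∈ Finset.range N, m.h i * m.avg g i ^ ((2 : ℝ) / 3)
  calc m.sigma g
      ≤ ∑ i ∈ Finset.range N, (m.h i + S⁻¹ * (m.h i * m.avg g i ^ ((2 : ℝ) / 3))) :=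
        Finset.sum_le_sum fun i hi => by
          have := mul_le_mul_of_nonneg_right (m.rho_le g i) (m.h_pos (Finset.mem_range.1 hi)).le
          linarith
    _ = 1 + S⁻¹ * S := by rw [Finset.sum_add_distrib, m.sum_h, ← Finset.mul_sum]
    _ ≤ 2 := by linarith [inv_mul_le_one (a := S)]

variable {m} in
lemma IsEquidistributing.h_le {g : ℝ → ℝ} (hm : m.IsEquidistributing g) (hi : i < N) :
    m.h i ≤ 2 / N :=
  calc m.h i ≤ m.rho g i * m.h i := le_mul_of_one_le_left (m.h_pos hi).le (m.one_le_rho g i)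
    _ = m.sigma g / N := hm i hi
    _ ≤ 2 / N := by gcongr; exact m.sigma_le_two g

end Mesh

lemma Coeffs.exists_lpNorm_res_sub_res_le (P : Coeffs) {f : ℝ → ℝ} {u : H1}
    (hu : P.IsWeakSolution f u) :
    ∃ C, 0 ≤ C ∧ ∀ {N : ℕ} {m : Mesh N} {uh : H1}, P.IsFESolution f m uh →
      lpNorm (P.res f uh - P.res f u) 2 unitMeasure
        ≤ C * lpNorm (u.dval - m.project u.dval) 2 unitMeasure := by
  set L := lpNorm (P.a' - P.b) ∞ unitMeasure + lpNorm P.c ∞ unitMeasure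
  have hL : 0 ≤ L := add_nonneg lpNorm_nonneg lpNorm_nonneg
  refine ⟨L * (P.continuityConst / P.a0),
    mul_nonneg hL (div_nonneg P.continuityConst_nonneg P.a0_pos.le), fun {N m uh} huh => ?_⟩
  calc lpNorm (P.res f uh - P.res f u) 2 unitMeasure
      = lpNorm (P.res f u - P.res f uh) 2 unitMeasure := lpNorm_sub_comm _ _ _ _
    _ ≤ L * (u - uh).seminorm := P.lpNorm_res_sub_res_le f hu.1 huh.1
    _ ≤ L * (P.continuityConst / P.a0 * (u - m.interp u).seminorm) :=
        mul_le_mul_of_nonneg_left (P.seminorm_sub_le hu huh ((m.interp_val_zero u).trans hu.1)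
          ((m.interp_val_one u).trans hu.2.1) (m.isPL_interp u)) hL
    _ = _ := (mul_assoc _ _ _).symm

lemma Coeffs.exists_lpNorm_avgStep_res_sub_abs_res_le (P : Coeffs) {f : ℝ → ℝ} (hf : MemL2 f)
    {u : H1} (hu : P.IsWeakSolution f u) {ε : ℝ} (hε : 0 < ε) :
    ∃ δ > 0, ∀ {N : ℕ} (m : Mesh N) (uh : H1), P.IsFESolution f m uh → (∀ i < N, m.h i ≤ δ) →
      lpNorm (m.avgStep (P.res f uh) - |P.res f u|) 2 unitMeasure ≤ ε := by
  obtain ⟨C, hC, hres⟩ := P.exists_lpNorm_res_sub_res_le hu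
  have hε' : 0 < ε / (C + 2) := by positivity
  obtain ⟨δ₁, hδ₁, hproj_u⟩ := Mesh.exists_lpNorm_sub_project_le u.memLp_dval hε'
  obtain ⟨δ₂, hδ₂, hproj_r⟩ := Mesh.exists_lpNorm_sub_project_le (P.memLp_res hf u) hε'
  refine ⟨min δ₁ δ₂, lt_min hδ₁ hδ₂, fun {N} m uh huh hm => ?_⟩
  calc lpNorm (m.avgStep (P.res f uh) - |P.res f u|) 2 unitMeasure
      ≤ lpNorm (P.res f uh - P.res f u) 2 unitMeasure
        + 2 * lpNorm (P.res f u - m.project (P.res f u)) 2 unitMeasure :=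
        m.lpNorm_avgStep_sub_abs_le (P.memLp_res hf uh) (P.memLp_res hf u)
    _ ≤ C * (ε / (C + 2)) + 2 * (ε / (C + 2)) := by
        gcongr
        · refine (hres huh).trans (mul_le_mul_of_nonneg_left (hproj_u m fun i hi => ?_) hC)
          exact (hm i hi).trans (min_le_left _ _)
        · exact hproj_r m fun i hi => (hm i hi).trans (min_le_right _ _)
    _ = ε := by field_simp

theorem statement2_general (P : Coeffs) {f : ℝ → ℝ} (hf : MemL2 f) {u : H1}
    (hu : P.IsWeakSolution f u) {ε : ℝ} (hε : 0 < ε) :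
    ∃ δ > 0, ∀ {N : ℕ} (m : Mesh N) (uh : H1), P.IsFESolution f m uh → (∀ i < N, m.h i ≤ δ) →
      |√(m.alpha (P.res f uh)) - Lp23 (P.res f u)| ≤ ε := by
  have hr : MemLp (P.res f u) 2 unitMeasure := P.memLp_res hf u
  have exponent_le_one : (2 / 3 : ℝ≥0) ≤ 1 := by norm_num [div_le_one]
  have exponent_le : ((2 / 3 : ℝ≥0) : ℝ≥0∞) ≤ 2 :=
    (ENNReal.coe_le_one_iff.2 exponent_le_one).trans one_le_two
  obtain ⟨η, hη, hcont⟩ := exists_abs_lpNorm_sub_lpNorm_le (p := 2 / 3) (by positivity)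
    exponent_le_one (hr.abs.mono_exponent exponent_le) hε
  obtain ⟨δ, hδ, hL2⟩ := P.exists_lpNorm_avgStep_res_sub_abs_res_le hf hu hη
  refine ⟨δ, hδ, fun m uh huh hm => ?_⟩
  have hstep (p : ℝ≥0∞) : MemLp (m.avgStep (P.res f uh)) p unitMeasure := m.memLp_step _ p
  rw [m.sqrt_alpha, Lp23_eq_lpNorm (hstep 2).1, Lp23_eq_lpNorm hr.1, ← lpNorm_abs hr.1]
  refine hcont _ (hstep _) (le_trans ?_ (hL2 m uh huh hm))
  exact lpNorm_le_lpNorm_of_exponent_le exponent_le ((hstep 2).sub hr.abs)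

/-- √α_h → ‖r‖_{L^{2/3}} as N → ∞ over equidistributing meshes. -/
theorem statement2 (P : Coeffs) (f : ℝ → ℝ) (hf : MemL2 f)
    (u : H1) (hu : P.IsWeakSolution f u) :
    ∀ ε : ℝ, 0 < ε → ∃ N₁ : ℕ, ∀ N : ℕ, N₁ ≤ N →
      ∀ (m : Mesh N) (uh : H1), P.IsFESolution f m uh →
        m.IsEquidistributing (P.res f uh) →
        |Real.sqrt (m.alpha (P.res f uh)) - Lp23 (P.res f u)| ≤ ε := by
  intro ε hε
  obtain ⟨δ, hδ, hconv⟩ := statement2_general P hf hu hε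
  obtain ⟨N₁, hN₁⟩ := eventually_atTop.1
    ((tendsto_const_div_atTop_nhds_zero_nat (2 : ℝ)).eventually_le_const hδ)
  exact ⟨N₁, fun N hN m uh huh hm =>
    hconv m uh huh fun i hi => (hm.h_le hi).trans (hN₁ N hN)⟩

end EquidMesh
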